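/- Landen's trilogarithm identity: for all real z with 0 < z < 1, Li₃(z) + Li₃(1−z) + Li₃(1 − 1/z) = ζ(3) + (1/6)·(log z)³ + (π²/6)·log z − (1/2)·(log z)²·log(1−z). -/

import Mathlib

noncomputable def Li2 (z : ℝ) : ℝ := -∫ t in (0:ℝ)..z, Real.log (1 - t) / t

noncomputable def Li3 (z : ℝ) : ℝ := ∫ t in (0:ℝ)..z, Li2 t / t

/-!
Under `z ↦ 1 - z` and `z ↦ 1 - 1 / z` the form `dz / z` pulls back to `-dz / (1 - z)`
and `-dz / (z (1 - z))`. Hence `Li3 z + Li3 (1 - z) + Li3 (1 - 1 / z)` has a derivative that is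
linear in `Li2 z`, `Li2 (1 - z)` and `Li2 (1 - 1 / z)`, and the reflection and Landen identities
for `Li2` turn it into an elementary function. Those two identities follow from differentiation in
the same way. The constants of integration are read off at `z = 1`, where the power series converge
to `Li2 1 = π ^ 2 / 6` and `Li3 1 = ζ(3)`.
-/

open MeasureTheory Real Set
open scoped Interval

section Calculus

lemma eqOn_Ioc_of_hasDerivAt_eq {E : Type*} [NormedAddCommGroup E] [NormedSpace ℝ E]
    {f g f' : ℝ → E} {a b : ℝ}
    (hf : ContinuousOn f (Ioc a b)) (hg : ContinuousOn g (Ioc a b))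
    (hf' : ∀ x ∈ Ioo a b, HasDerivAt f (f' x) x) (hg' : ∀ x ∈ Ioo a b, HasDerivAt g (f' x) x)
    (hb : f b = g b) : EqOn f g (Ioc a b) := by
  intro x hx
  have hsub : Icc x b ⊆ Ioc a b := fun y hy ↦ ⟨hx.1.trans_le hy.1, hy.2⟩
  have hderiv : ∀ y ∈ Ico x b, HasDerivWithinAt (f - g) 0 (Ici y) y := fun y hy ↦ by
    have hy' : y ∈ Ioo a b := ⟨hx.1.trans_le hy.1, hy.2⟩
    simpa only [sub_self] using ((hf' y hy').sub (hg' y hy')).hasDerivWithinAt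
  have hconst : (f - g) b = (f - g) x :=
    constant_of_has_deriv_right_zero ((hf.sub hg).mono hsub) hderiv b (right_mem_Icc.2 hx.2)
  rw [Pi.sub_apply, Pi.sub_apply, hb, sub_self] at hconst
  exact sub_eq_zero.1 hconst.symm

lemma hasDerivAt_integral_div {f : ℝ → ℝ} {s : Set ℝ} {x : ℝ} (hs : IsOpen s)
    (hconn : s.OrdConnected) (h0s : 0 ∈ s) (hf : ContinuousOn f s) (hf' : DifferentiableAt ℝ f 0)
    (hf0 : f 0 = 0) (hx : x ∈ s) :
    HasDerivAt (fun x ↦ ∫ t in (0:ℝ)..x, f t / t) (dslope f 0 x) x := by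
  have hcont : ContinuousOn (dslope f 0) s :=
    (continuousOn_dslope (hs.mem_nhds h0s)).2 ⟨hf, hf'⟩
  have hintegral : (fun x ↦ ∫ t in (0:ℝ)..x, f t / t) = fun x ↦ ∫ t in (0:ℝ)..x, dslope f 0 t := by
    ext y
    refine intervalIntegral.integral_congr_ae ?_
    filter_upwards [Measure.ae_ne volume 0] with t ht _
    rw [dslope_of_ne _ ht, slope_def_field, hf0, sub_zero, sub_zero]
  rw [hintegral]
  exact intervalIntegral.integral_hasDerivAt_right
    (hcont.mono (hconn.uIcc_subset h0s hx)).intervalIntegrable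
    (hcont.stronglyMeasurableAtFilter hs x hx) (hcont.continuousAt (hs.mem_nhds hx))

lemma setIntegral_uIoc_norm_mul_pow (c x : ℝ) (n : ℕ) :
    ∫ t in Ι 0 x, ‖c * t ^ n‖ = ‖c / (n + 1) * x ^ (n + 1)‖ := by
  have hpow : ∫ t in Ι 0 x, |t| ^ n = |x| ^ (n + 1) / (n + 1) := by
    simpa only [sub_zero] using integral_pow_abs_sub_uIoc (a := 0) (b := x) (n := n)
  simp only [norm_mul, norm_pow, norm_div, norm_eq_abs, integral_const_mul, hpow]
  rw [abs_of_nonneg (by positivity : (0:ℝ) ≤ n + 1), mul_div_assoc', div_mul_eq_mul_div]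

lemma hasSum_integral_div {a : ℕ → ℝ} {f : ℝ → ℝ} {x : ℝ}
    (ha : Summable fun n : ℕ ↦ a n / (n + 1) * x ^ (n + 1))
    (hf : ∀ t, |t| < |x| → HasSum (fun n ↦ a n * t ^ (n + 1)) (f t)) :
    HasSum (fun n : ℕ ↦ a n / (n + 1) * x ^ (n + 1)) (∫ t in (0:ℝ)..x, f t / t) := by
  have hint (n : ℕ) : IntegrableOn (fun t ↦ a n * t ^ n) (Ι 0 x) :=
    (by fun_prop : Continuous fun t : ℝ ↦ a n * t ^ n).integrableOn_uIoc
  have hmonomial (n : ℕ) : ∫ t in (0:ℝ)..x, a n * t ^ n = a n / (n + 1) * x ^ (n + 1) := by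
    rw [intervalIntegral.integral_const_mul, integral_pow, zero_pow n.succ_ne_zero, sub_zero,
      mul_div_assoc', div_mul_eq_mul_div]
  have hsum := hasSum_integral_of_summable_integral_norm hint
    (by simpa only [setIntegral_uIoc_norm_mul_pow] using ha.norm)
  have hcongr : ∫ t in Ι 0 x, ∑' n, a n * t ^ n = ∫ t in Ι 0 x, f t / t := by
    refine setIntegral_congr_ae measurableSet_uIoc ?_
    filter_upwards [Measure.ae_ne volume 0, Measure.ae_ne volume x] with t ht0 htx ht
    have htx' : |t| < |x| := by
      rcases mem_uIoc.1 ht with ⟨h, h'⟩ | ⟨h, h'⟩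
      · exact (abs_of_pos h).trans_lt ((h'.lt_of_ne htx).trans_le (le_abs_self x))
      · exact (abs_of_nonpos h').trans_lt ((neg_lt_neg h).trans_le (neg_le_abs x))
    rw [← ((hf t htx').div_const t).tsum_eq]
    refine tsum_congr fun n ↦ ?_
    rw [pow_succ, ← mul_assoc, mul_div_cancel_right₀ _ ht0]
  simpa only [hcongr, ← intervalIntegral.intervalIntegral_eq_integral_uIoc, hmonomial] using
    hsum.const_smul (if 0 ≤ x then (1:ℝ) else -1)

lemma continuousOn_comp_one_sub {f : ℝ → ℝ} (hf : ContinuousOn f (Iic 1)) :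
    ContinuousOn (fun z ↦ f (1 - z)) (Ici 0) :=
  hf.comp (by fun_prop) fun _ hz ↦ sub_le_self (1 : ℝ) hz

lemma continuousOn_comp_one_sub_one_div {f : ℝ → ℝ} (hf : ContinuousOn f (Iic 1)) :
    ContinuousOn (fun z ↦ f (1 - 1 / z)) (Ioi 0) :=
  hf.comp (continuousOn_const.sub (continuousOn_const.div continuousOn_id fun _ hz ↦ hz.ne'))
    fun _ hz ↦ sub_le_self (1 : ℝ) (one_div_pos.2 hz).le

lemma hasDerivAt_comp_one_sub_one_div {f : ℝ → ℝ} {f' x : ℝ} (hx : x ≠ 0)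
    (hf : HasDerivAt f f' (1 - 1 / x)) : HasDerivAt (fun z ↦ f (1 - 1 / z)) (f' / x ^ 2) x := by
  have hinv : HasDerivAt (fun z : ℝ ↦ 1 - 1 / z) (1 / x ^ 2) x := by
    simpa using (hasDerivAt_inv hx).const_sub 1
  simpa only [mul_one_div, Function.comp_def] using hf.comp x hinv

lemma hasDerivAt_log_one_sub {x : ℝ} (hx : x ≠ 1) :
    HasDerivAt (fun t ↦ log (1 - t)) (-(1 - x)⁻¹) x :=
  (hasDerivAt_log (sub_ne_zero.2 hx.symm)).comp_const_sub 1 x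

-- At `z = 1` the convention `log 0 = 0` supplies the limit value `0`.
lemma continuousAt_log_mul_log_one_sub : ContinuousAt (fun z ↦ log z * log (1 - z)) 1 := by
  have hfactor : (fun z ↦ log z * log (1 - z)) =
      fun z ↦ -(dslope log 1 z * ((1 - z) * log (1 - z))) := by
    ext z
    have hslope : (z - 1) * dslope log 1 z = log z := by
      simpa using sub_smul_dslope log 1 z
    rw [← hslope]
    ring
  rw [hfactor]
  have hslope : ContinuousAt (dslope log 1) 1 :=
    continuousAt_dslope_same.2 (differentiableAt_log one_ne_zero)
  exact (hslope.mul (continuous_mul_log.comp (continuous_const.sub continuous_id)).continuousAt).neg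

lemma continuousOn_log_mul_log_one_sub :
    ContinuousOn (fun z ↦ log z * log (1 - z)) (Ioi 0) := by
  intro z hz
  refine ContinuousAt.continuousWithinAt ?_
  rcases eq_or_ne z 1 with rfl | h1
  · exact continuousAt_log_mul_log_one_sub
  · exact (continuousAt_log hz.ne').mul (hasDerivAt_log_one_sub h1).continuousAt

end Calculus

section PowerSeries

lemma summable_one_div_succ_pow {k : ℕ} (hk : 1 < k) :
    Summable fun n : ℕ ↦ 1 / ((n : ℝ) + 1) ^ k := by
  simpa using (summable_nat_add_iff 1).2 (summable_one_div_nat_pow.2 hk)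

lemma norm_pow_succ_div_succ_pow_le {x : ℝ} (hx : |x| ≤ 1) (k n : ℕ) :
    ‖x ^ (n + 1) / ((n : ℝ) + 1) ^ k‖ ≤ 1 / ((n : ℝ) + 1) ^ k := by
  rw [norm_div, norm_pow, norm_of_nonneg (by positivity : (0:ℝ) ≤ ((n : ℝ) + 1) ^ k)]
  gcongr
  exact pow_le_one₀ (norm_nonneg x) hx

lemma hasSum_integral_div_of_hasSum_pow_div {k : ℕ} (hk : 0 < k) {f : ℝ → ℝ}
    (hf : ∀ t, |t| < 1 → HasSum (fun n : ℕ ↦ t ^ (n + 1) / ((n : ℝ) + 1) ^ k) (f t))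
    {x : ℝ} (hx : |x| ≤ 1) :
    HasSum (fun n : ℕ ↦ x ^ (n + 1) / ((n : ℝ) + 1) ^ (k + 1)) (∫ t in (0:ℝ)..x, f t / t) := by
  have hcoeff (n : ℕ) : x ^ (n + 1) / ((n : ℝ) + 1) ^ (k + 1) =
      1 / ((n : ℝ) + 1) ^ k / (n + 1) * x ^ (n + 1) := by
    rw [div_div, ← pow_succ, one_div_mul_eq_div]
  have hsummable := (summable_one_div_succ_pow (Nat.lt_add_of_pos_left hk)).of_norm_bounded
    (norm_pow_succ_div_succ_pow_le hx (k + 1))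
  simp only [hcoeff] at hsummable ⊢
  refine hasSum_integral_div hsummable fun t ht ↦ ?_
  simpa only [one_div_mul_eq_div] using hf t (ht.trans_le hx)

lemma continuousOn_Iic_one_of_hasSum {k : ℕ} (hk : 1 < k) {f : ℝ → ℝ}
    (hf : ContinuousOn f (Iio 1))
    (hsum : ∀ x, |x| ≤ 1 → HasSum (fun n : ℕ ↦ x ^ (n + 1) / ((n : ℝ) + 1) ^ k) (f x)) :
    ContinuousOn f (Iic 1) := by
  have htsum : ContinuousOn (fun x : ℝ ↦ ∑' n : ℕ, x ^ (n + 1) / ((n : ℝ) + 1) ^ k)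
      (Icc (-1) 1) :=
    continuousOn_tsum (fun n ↦ by fun_prop) (summable_one_div_succ_pow hk)
      fun n x hx ↦ norm_pow_succ_div_succ_pow_le (abs_le.2 hx) k n
  have hIcc : ContinuousOn f (Icc (-1) 1) :=
    htsum.congr fun x hx ↦ (hsum x (abs_le.2 hx)).tsum_eq.symm
  intro x hx
  rcases (mem_Iic.1 hx).lt_or_eq with hlt | rfl
  · exact (hf.continuousAt (Iio_mem_nhds hlt)).continuousWithinAt
  · exact (continuousWithinAt_Icc_iff_Iic (by norm_num)).1 (hIcc 1 (by norm_num))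

end PowerSeries

section Dilogarithm

lemma Li2_eq_integral : Li2 = fun x ↦ ∫ t in (0:ℝ)..x, -log (1 - t) / t := by
  ext x
  simp only [Li2, neg_div, intervalIntegral.integral_neg]

lemma Li2_zero : Li2 0 = 0 := by
  simp [Li2]

lemma hasDerivAt_Li2_dslope {x : ℝ} (hx : x < 1) :
    HasDerivAt Li2 (dslope (fun t ↦ -log (1 - t)) 0 x) x := by
  have hlog (t : ℝ) (ht : t < 1) : DifferentiableAt ℝ (fun t ↦ -log (1 - t)) t :=
    (hasDerivAt_log_one_sub ht.ne).differentiableAt.neg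
  rw [Li2_eq_integral]
  exact hasDerivAt_integral_div isOpen_Iio ordConnected_Iio (mem_Iio.2 one_pos)
    (fun t ht ↦ (hlog t ht).continuousAt.continuousWithinAt) (hlog 0 one_pos) (by simp) hx

lemma hasDerivAt_Li2 {x : ℝ} (hx : x < 1) (hx0 : x ≠ 0) :
    HasDerivAt Li2 (-log (1 - x) / x) x := by
  simpa [dslope_of_ne _ hx0, slope_def_field] using hasDerivAt_Li2_dslope hx

lemma hasSum_Li2 {x : ℝ} (hx : |x| ≤ 1) :
    HasSum (fun n : ℕ ↦ x ^ (n + 1) / ((n : ℝ) + 1) ^ 2) (Li2 x) := by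
  rw [Li2_eq_integral]
  refine hasSum_integral_div_of_hasSum_pow_div one_pos (fun t ht ↦ ?_) hx
  simpa only [pow_one] using hasSum_pow_div_log_of_abs_lt_one ht

lemma continuousOn_Li2 : ContinuousOn Li2 (Iic 1) :=
  continuousOn_Iic_one_of_hasSum one_lt_two
    (fun _ hx ↦ (hasDerivAt_Li2_dslope hx).continuousAt.continuousWithinAt) fun _ ↦ hasSum_Li2

lemma Li2_one : Li2 1 = π ^ 2 / 6 := by
  have hzeta : HasSum (fun n : ℕ ↦ 1 / ((n : ℝ) + 1) ^ 2) (π ^ 2 / 6) := by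
    simpa using (hasSum_nat_add_iff' 1).2 hasSum_zeta_two
  exact (hasSum_Li2 abs_one.le).unique (by simpa only [one_pow] using hzeta)

lemma Li2_add_Li2_one_sub {z : ℝ} (h0 : 0 < z) (h1 : z ≤ 1) :
    Li2 z + Li2 (1 - z) = π ^ 2 / 6 - log z * log (1 - z) := by
  refine eqOn_Ioc_of_hasDerivAt_eq (f := fun z ↦ Li2 z + Li2 (1 - z))
    (g := fun z ↦ π ^ 2 / 6 - log z * log (1 - z))
    (f' := fun z ↦ -(z⁻¹ * log (1 - z) + log z * -(1 - z)⁻¹))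
    ((continuousOn_Li2.mono Ioc_subset_Iic_self).add
      ((continuousOn_comp_one_sub continuousOn_Li2).mono fun _ hz ↦ hz.1.le))
    (continuousOn_const.sub (continuousOn_log_mul_log_one_sub.mono Ioc_subset_Ioi_self))
    (fun x hx ↦ ?_) (fun x hx ↦ ?_) (by simp [Li2_one, Li2_zero]) ⟨h0, h1⟩
  · have hx1 : 1 - x ≠ 0 := (sub_pos.2 hx.2).ne'
    refine ((hasDerivAt_Li2 hx.2 hx.1.ne').add
      ((hasDerivAt_Li2 (sub_lt_self 1 hx.1) hx1).comp_const_sub 1 x)).congr_deriv ?_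
    rw [sub_sub_cancel]
    ring
  · exact ((hasDerivAt_log hx.1.ne').mul (hasDerivAt_log_one_sub hx.2.ne)).const_sub _

lemma Li2_one_sub_add_Li2_one_sub_one_div {z : ℝ} (h0 : 0 < z) :
    Li2 (1 - z) + Li2 (1 - 1 / z) = -log z ^ 2 / 2 := by
  -- Both sides are invariant under `z ↦ 1 / z`.
  wlog h1 : z ≤ 1 generalizing z
  · have hinv := this (one_div_pos.2 h0) ((div_le_one h0).2 (le_of_not_ge h1))
    rwa [one_div_one_div, add_comm, log_div one_ne_zero h0.ne', log_one, zero_sub, neg_sq] at hinv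
  refine eqOn_Ioc_of_hasDerivAt_eq (f := fun z ↦ Li2 (1 - z) + Li2 (1 - 1 / z))
    (g := fun z ↦ -log z ^ 2 / 2) (f' := fun z ↦ -log z / z)
    (((continuousOn_comp_one_sub continuousOn_Li2).mono fun _ hz ↦ hz.1.le).add
      ((continuousOn_comp_one_sub_one_div continuousOn_Li2).mono Ioc_subset_Ioi_self))
    (((continuousOn_log.mono fun _ hz ↦ hz.1.ne').pow 2).neg.div_const 2)
    (fun x hx ↦ ?_) (fun x hx ↦ ?_) (by simp [Li2_zero]) ⟨h0, h1⟩
  · have hx0 : x ≠ 0 := hx.1.ne'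
    have hx1 : 1 - x ≠ 0 := (sub_pos.2 hx.2).ne'
    have hneg : 1 - 1 / x < 0 := sub_neg.2 (one_lt_one_div hx.1 hx.2)
    refine (((hasDerivAt_Li2 (sub_lt_self 1 hx.1) hx1).comp_const_sub 1 x).add
      (hasDerivAt_comp_one_sub_one_div hx0
        (hasDerivAt_Li2 (hneg.trans one_pos) hneg.ne))).congr_deriv ?_
    rw [sub_sub_cancel, sub_sub_cancel, one_div x, log_inv,
      show 1 - x⁻¹ = -(1 - x) / x by field_simp; ring]
    field_simp
    ring
  · refine (((hasDerivAt_log hx.1.ne').pow 2).neg.div_const 2).congr_deriv ?_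
    ring

end Dilogarithm

section Trilogarithm

lemma Li3_zero : Li3 0 = 0 := by
  simp [Li3]

lemma hasDerivAt_Li3_dslope {x : ℝ} (hx : x < 1) : HasDerivAt Li3 (dslope Li2 0 x) x :=
  hasDerivAt_integral_div isOpen_Iio ordConnected_Iio (mem_Iio.2 one_pos)
    (continuousOn_Li2.mono Iio_subset_Iic_self)
    (hasDerivAt_Li2_dslope one_pos).differentiableAt Li2_zero hx

lemma hasDerivAt_Li3 {x : ℝ} (hx : x < 1) (hx0 : x ≠ 0) : HasDerivAt Li3 (Li2 x / x) x := by
  simpa [dslope_of_ne _ hx0, slope_def_field, Li2_zero] using hasDerivAt_Li3_dslope hx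

lemma hasSum_Li3 {x : ℝ} (hx : |x| ≤ 1) :
    HasSum (fun n : ℕ ↦ x ^ (n + 1) / ((n : ℝ) + 1) ^ 3) (Li3 x) :=
  hasSum_integral_div_of_hasSum_pow_div two_pos (fun _ ht ↦ hasSum_Li2 ht.le) hx

lemma continuousOn_Li3 : ContinuousOn Li3 (Iic 1) :=
  continuousOn_Iic_one_of_hasSum (by norm_num)
    (fun _ hx ↦ (hasDerivAt_Li3_dslope hx).continuousAt.continuousWithinAt) fun _ ↦ hasSum_Li3

lemma Li3_one : Li3 1 = ∑' n : ℕ, 1 / ((n : ℝ) + 1) ^ 3 := by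
  simpa only [one_pow] using (hasSum_Li3 abs_one.le).tsum_eq.symm

/-- The left-hand side of Landen's trilogarithm identity. -/
noncomputable def landenSum (z : ℝ) : ℝ := Li3 z + Li3 (1 - z) + Li3 (1 - 1 / z)

/-- The right-hand side of Landen's trilogarithm identity, without the constant `ζ(3)`. -/
noncomputable def landenElementary (z : ℝ) : ℝ :=
  1 / 6 * log z ^ 3 + π ^ 2 / 6 * log z - 1 / 2 * log z ^ 2 * log (1 - z)

lemma landenSum_one : landenSum 1 = ∑' n : ℕ, 1 / ((n : ℝ) + 1) ^ 3 := by
  simp [landenSum, Li3_one, Li3_zero]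

lemma landenElementary_one : landenElementary 1 = 0 := by
  simp [landenElementary]

lemma continuousOn_landenSum : ContinuousOn landenSum (Ioc 0 1) :=
  ((continuousOn_Li3.mono Ioc_subset_Iic_self).add
    ((continuousOn_comp_one_sub continuousOn_Li3).mono fun _ hz ↦ hz.1.le)).add
    ((continuousOn_comp_one_sub_one_div continuousOn_Li3).mono Ioc_subset_Ioi_self)

lemma continuousOn_landenElementary : ContinuousOn landenElementary (Ioi 0) := by
  have hlog : ContinuousOn log (Ioi 0) := continuousOn_log.mono fun _ hz ↦ hz.ne'
  refine ((((hlog.pow 3).const_mul (1 / 6)).add (hlog.const_mul (π ^ 2 / 6))).sub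
    ((hlog.mul continuousOn_log_mul_log_one_sub).const_mul (1 / 2))).congr fun z _ ↦ ?_
  simp only [landenElementary, Pi.add_apply, Pi.sub_apply, Pi.mul_apply, Pi.pow_apply]
  ring

lemma hasDerivAt_landenSum {x : ℝ} (h0 : 0 < x) (h1 : x < 1) :
    HasDerivAt landenSum (log x ^ 2 / (2 * x) + π ^ 2 / 6 / x - log x * log (1 - x) / x
      + log x ^ 2 / (2 * (1 - x))) x := by
  have hx0 : x ≠ 0 := h0.ne'
  have hx1 : 1 - x ≠ 0 := (sub_pos.2 h1).ne'
  have hneg : 1 - 1 / x < 0 := sub_neg.2 (one_lt_one_div h0 h1)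
  refine (((hasDerivAt_Li3 h1 hx0).add
    ((hasDerivAt_Li3 (sub_lt_self 1 h0) hx1).comp_const_sub 1 x)).add
    (hasDerivAt_comp_one_sub_one_div hx0
      (hasDerivAt_Li3 (hneg.trans one_pos) hneg.ne))).congr_deriv ?_
  rw [eq_sub_of_add_eq (Li2_add_Li2_one_sub h0 h1.le),
    eq_sub_of_add_eq' (Li2_one_sub_add_Li2_one_sub_one_div h0),
    show 1 - 1 / x = -(1 - x) / x by field_simp; ring]
  field_simp
  ring

lemma hasDerivAt_landenElementary {x : ℝ} (hx0 : x ≠ 0) (hx1 : x ≠ 1) :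
    HasDerivAt landenElementary (log x ^ 2 / (2 * x) + π ^ 2 / 6 / x - log x * log (1 - x) / x
      + log x ^ 2 / (2 * (1 - x))) x := by
  have hlog := hasDerivAt_log hx0
  refine ((((hlog.pow 3).const_mul (1 / 6)).add (hlog.const_mul (π ^ 2 / 6))).sub
    (((hlog.pow 2).const_mul (1 / 2)).mul (hasDerivAt_log_one_sub hx1))).congr_deriv ?_
  have hx1' : 1 - x ≠ 0 := sub_ne_zero.2 hx1.symm
  simp only [Pi.pow_apply]
  field_simp
  ring

end Trilogarithm

theorem landen_trilog (z : ℝ) (h0 : 0 < z) (h1 : z < 1) :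
    Li3 z + Li3 (1 - z) + Li3 (1 - 1 / z) =
      (∑' n : ℕ, 1 / ((n : ℝ) + 1) ^ 3) + (1 / 6) * Real.log z ^ 3
        + (Real.pi ^ 2 / 6) * Real.log z
        - (1 / 2) * Real.log z ^ 2 * Real.log (1 - z) := by
  have heq : EqOn landenSum (fun z ↦ (∑' n : ℕ, 1 / ((n : ℝ) + 1) ^ 3) + landenElementary z)
      (Ioc 0 1) :=
    eqOn_Ioc_of_hasDerivAt_eq continuousOn_landenSum
      (continuousOn_const.add (continuousOn_landenElementary.mono Ioc_subset_Ioi_self))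
      (fun _ hx ↦ hasDerivAt_landenSum hx.1 hx.2)
      (fun _ hx ↦ (hasDerivAt_landenElementary hx.1.ne' hx.2.ne).const_add _)
      (by rw [landenSum_one, landenElementary_one, add_zero])
  have hz := heq ⟨h0, h1.le⟩
  simp only [landenSum, landenElementary] at hz
  rw [hz]
  ring
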